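/- Let A = (A_1,…,A_n) be a nonnegative vector in ℝ^n and D = n + A_1 + ⋯ + A_n. Then for every continuously differentiable function f : ℝ^n → ℝ with compact support, ( ∫_{ℝ^n_A} |f|^2 x^A dx )^{1 + 2/D} ≤ (2/(Π(A) e D)) · ( ∫_{ℝ^n_A} |∇f|^2 x^A dx ) · ( ∫_{ℝ^n_A} |f| x^A dx )^{4/D}. -/

import Mathlib

open MeasureTheory Real Filter

noncomputable section

/-- The positivity region `ℝ^n_A = {x : x_i > 0 whenever A_i > 0}`. -/
def monSet {ι : Type*} [Fintype ι] (A : ι → ℝ) : Set (EuclideanSpace ℝ ι) :=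
  {x | ∀ i, 0 < A i → 0 < x i}

/-- The monomial weight `x^A = ∏ |x_i|^{A_i}`. -/
def monWeight {ι : Type*} [Fintype ι] (A : ι → ℝ) (x : EuclideanSpace ℝ ι) : ℝ :=
  ∏ i, |x i| ^ A i

/-- The homogeneous dimension `D = n + A_1 + ⋯ + A_n`. -/
def monDim {ι : Type*} [Fintype ι] (A : ι → ℝ) : ℝ :=
  (Fintype.card ι : ℝ) + ∑ i, A i

/-- `k = #{i : A_i > 0}`. -/
def monK {ι : Type*} [Fintype ι] (A : ι → ℝ) : ℕ :=
  Nat.card {i : ι // 0 < A i}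

/-- `Π(A) = [ (∏ Γ((A_i+1)/2)) / 2^k ]^{2/D}`. -/
def monPi {ι : Type*} [Fintype ι] (A : ι → ℝ) : ℝ :=
  ((∏ i, Gamma ((A i + 1) / 2)) / 2 ^ monK A) ^ (2 / monDim A)

open scoped Topology

/-- The one-dimensional positivity region: `(0, ∞)` if `a > 0`, the whole line otherwise. -/
def halfLine (a : ℝ) : Set ℝ := {x | 0 < a → 0 < x}

lemma halfLine_of_pos {a : ℝ} (ha : 0 < a) : halfLine a = Set.Ioi 0 := by
  ext x; simp [halfLine, ha]

lemma halfLine_of_nonpos {a : ℝ} (ha : a ≤ 0) : halfLine a = Set.univ := by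
  ext x; simp [halfLine, ha.not_gt]

lemma isOpen_halfLine (a : ℝ) : IsOpen (halfLine a) := by
  by_cases ha : 0 < a
  · rw [halfLine_of_pos ha]; exact isOpen_Ioi
  · rw [halfLine_of_nonpos (not_lt.1 ha)]; exact isOpen_univ

lemma measurableSet_halfLine (a : ℝ) : MeasurableSet (halfLine a) :=
  (isOpen_halfLine a).measurableSet

lemma halfLine_mono {a x y : ℝ} (hx : x ∈ halfLine a) (hxy : x ≤ y) : y ∈ halfLine a :=
  fun ha => (hx ha).trans_le hxy

lemma exists_lt_mem_halfLine {a x : ℝ} (hx : x ∈ halfLine a) : ∃ y ∈ halfLine a, y < x := by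
  by_cases ha : 0 < a
  · exact ⟨x / 2, fun _ => half_pos (hx ha), half_lt_self (hx ha)⟩
  · exact ⟨x - 1, fun h => absurd h ha, by linarith⟩

/-- The distribution function of the density `p` on `halfLine a`. -/
def distFun (a : ℝ) (p : ℝ → ℝ) (x : ℝ) : ℝ := ∫ t in Set.Iic x, (halfLine a).indicator p t

section distFun

variable {a : ℝ} {p : ℝ → ℝ}

lemma distFun_sub (hi : IntegrableOn p (halfLine a)) (x y : ℝ) :
    distFun a p y - distFun a p x = ∫ t in x..y, (halfLine a).indicator p t := by
  have hI : Integrable ((halfLine a).indicator p) :=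
    (integrable_indicator_iff (measurableSet_halfLine a)).2 hi
  exact intervalIntegral.integral_Iic_sub_Iic hI.integrableOn hI.integrableOn

lemma continuous_distFun (hi : IntegrableOn p (halfLine a)) : Continuous (distFun a p) := by
  have hI : Integrable ((halfLine a).indicator p) :=
    (integrable_indicator_iff (measurableSet_halfLine a)).2 hi
  have : distFun a p = fun y => distFun a p 0 + ∫ t in (0 : ℝ)..y, (halfLine a).indicator p t := by
    funext y; rw [← distFun_sub hi]; ring
  rw [this]
  exact continuous_const.add
    (intervalIntegral.continuous_primitive (fun _ _ => hI.intervalIntegrable) 0)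

lemma hasDerivAt_distFun (hi : IntegrableOn p (halfLine a)) (hc : ContinuousOn p (halfLine a))
    {x : ℝ} (hx : x ∈ halfLine a) : HasDerivAt (distFun a p) (p x) x := by
  have hI : Integrable ((halfLine a).indicator p) :=
    (integrable_indicator_iff (measurableSet_halfLine a)).2 hi
  have : distFun a p = fun y => distFun a p 0 + ∫ t in (0 : ℝ)..y, (halfLine a).indicator p t := by
    funext y; rw [← distFun_sub hi]; ring
  rw [this]
  have hev : (halfLine a).indicator p =ᶠ[𝓝 x] p := by
    filter_upwards [(isOpen_halfLine a).mem_nhds hx] with y hy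
    exact Set.indicator_of_mem hy p
  have h := intervalIntegral.integral_hasDerivAt_right (a := 0) (b := x) hI.intervalIntegrable
    hI.aestronglyMeasurable.stronglyMeasurableAtFilter
    ((hc.continuousAt ((isOpen_halfLine a).mem_nhds hx)).congr hev.symm)
  rw [hev.self_of_nhds] at h
  exact h.const_add _

lemma strictMonoOn_distFun (hi : IntegrableOn p (halfLine a)) (hc : ContinuousOn p (halfLine a))
    (hp : ∀ x ∈ halfLine a, 0 < p x) : StrictMonoOn (distFun a p) (halfLine a) := by
  intro x hx y hy hxy
  obtain ⟨z, hz, hz'⟩ := exists_deriv_eq_slope (distFun a p) hxy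
    (continuous_distFun hi).continuousOn
    (fun z hz => (hasDerivAt_distFun hi hc
      (halfLine_mono hx hz.1.le)).differentiableAt.differentiableWithinAt)
  have hzJ := halfLine_mono hx hz.1.le
  rw [(hasDerivAt_distFun hi hc hzJ).deriv, eq_div_iff (sub_pos.2 hxy).ne'] at hz'
  nlinarith [mul_pos (hp z hzJ) (sub_pos.2 hxy)]

lemma tendsto_distFun_atBot : Tendsto (distFun a p) atBot (𝓝 0) :=
  tendsto_integral_Iic_zero (μ := volume) (f := (halfLine a).indicator p) (a := id) tendsto_id

lemma tendsto_distFun_atTop (hi : IntegrableOn p (halfLine a)) :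
    Tendsto (distFun a p) atTop (𝓝 (∫ x in halfLine a, p x)) := by
  have hI : Integrable ((halfLine a).indicator p) :=
    (integrable_indicator_iff (measurableSet_halfLine a)).2 hi
  rw [← integral_indicator (measurableSet_halfLine a)]
  exact (aecover_Iic tendsto_id).integral_tendsto_of_countably_generated hI

lemma distFun_mem_Ioo (hi : IntegrableOn p (halfLine a)) (hc : ContinuousOn p (halfLine a))
    (hp : ∀ x ∈ halfLine a, 0 < p x) {x : ℝ} (hx : x ∈ halfLine a) :
    distFun a p x ∈ Set.Ioo 0 (∫ x in halfLine a, p x) := by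
  have hI : Integrable ((halfLine a).indicator p) :=
    (integrable_indicator_iff (measurableSet_halfLine a)).2 hi
  have h0 : ∀ t, 0 ≤ (halfLine a).indicator p t :=
    Set.indicator_nonneg fun t ht => (hp t ht).le
  have hle : ∀ y, distFun a p y ≤ ∫ x in halfLine a, p x := fun y => by
    rw [← integral_indicator (measurableSet_halfLine a)]
    exact setIntegral_le_integral hI (Eventually.of_forall h0)
  obtain ⟨y, hy, hyx⟩ := exists_lt_mem_halfLine hx
  have hmono := strictMonoOn_distFun hi hc hp
  refine ⟨(setIntegral_nonneg measurableSet_Iic fun t _ => h0 t).trans_lt (hmono hy hx hyx), ?_⟩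
  exact (hmono hx (halfLine_mono hx (by linarith : x ≤ x + 1)) (by linarith)).trans_le (hle _)

lemma exists_distFun_eq (hi : IntegrableOn p (halfLine a)) {v : ℝ}
    (hv : v ∈ Set.Ioo 0 (∫ x in halfLine a, p x)) : ∃ y ∈ halfLine a, distFun a p y = v := by
  obtain ⟨y, hy⟩ := mem_range_of_exists_le_of_exists_ge (continuous_distFun hi)
    (((tendsto_distFun_atBot (a := a) (p := p)).eventually_lt_const hv.1).exists.imp
      fun _ => le_of_lt)
    (((tendsto_distFun_atTop hi).eventually_const_lt hv.2).exists.imp fun _ => le_of_lt)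
  refine ⟨y, fun ha => ?_, hy⟩
  by_contra hy0
  have : distFun a p y = 0 := by
    refine setIntegral_eq_zero_of_forall_eq_zero fun t ht => Set.indicator_of_notMem (fun h => ?_) _
    exact hy0 ((h ha).trans_le ht)
  linarith [hv.1]

/-- The monotone rearrangement of the density `q` onto the density `p` of the same mass. -/
lemma exists_transport {q : ℝ → ℝ} (hpi : IntegrableOn p (halfLine a))
    (hpc : ContinuousOn p (halfLine a)) (hp : ∀ x ∈ halfLine a, 0 < p x)
    (hqi : IntegrableOn q (halfLine a)) (hqc : ContinuousOn q (halfLine a))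
    (hq : ∀ x ∈ halfLine a, 0 < q x)
    (hpq : ∫ x in halfLine a, q x = ∫ x in halfLine a, p x) :
    ∃ T : ℝ → ℝ, (∀ x ∈ halfLine a, T x ∈ halfLine a ∧ HasDerivAt T (q x / p (T x)) x) ∧
      Set.InjOn T (halfLine a) := by
  choose! S hSJ hS using fun v hv => exists_distFun_eq (a := a) (p := p) (v := v) hpi hv
  have hmono := strictMonoOn_distFun hpi hpc hp
  have hScont : ∀ v ∈ Set.Ioo 0 (∫ x in halfLine a, p x), ContinuousAt S v := by
    intro v hv
    refine tendsto_order.2 ⟨fun y hy => ?_, fun y hy => ?_⟩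
    · by_cases hyJ : y ∈ halfLine a
      · have h1 : distFun a p y < v := (hmono hyJ (hSJ v hv) hy).trans_eq (hS v hv)
        filter_upwards [isOpen_Ioo.mem_nhds hv, lt_mem_nhds h1] with w hw hw1
        rw [← hS w hw] at hw1
        exact (hmono.lt_iff_lt hyJ (hSJ w hw)).1 hw1
      · filter_upwards [isOpen_Ioo.mem_nhds hv] with w hw
        by_contra hlt
        exact hyJ (halfLine_mono (hSJ w hw) (not_lt.1 hlt))
    · have hyJ : y ∈ halfLine a := halfLine_mono (hSJ v hv) hy.le
      have h1 : v < distFun a p y := (hS v hv).symm.trans_lt (hmono (hSJ v hv) hyJ hy)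
      filter_upwards [isOpen_Ioo.mem_nhds hv, gt_mem_nhds h1] with w hw hw1
      rw [← hS w hw] at hw1
      exact (hmono.lt_iff_lt (hSJ w hw) hyJ).1 hw1
  have hmem : ∀ x ∈ halfLine a, distFun a q x ∈ Set.Ioo 0 (∫ x in halfLine a, p x) :=
    fun x hx => hpq ▸ distFun_mem_Ioo hqi hqc hq hx
  refine ⟨fun x => S (distFun a q x), fun x hx => ⟨hSJ _ (hmem x hx), ?_⟩, fun x hx y hy h => ?_⟩
  · have hd := HasDerivAt.of_local_left_inverse (hScont _ (hmem x hx))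
      (hasDerivAt_distFun hpi hpc (hSJ _ (hmem x hx))) (hp _ (hSJ _ (hmem x hx))).ne'
      (by filter_upwards [isOpen_Ioo.mem_nhds (hmem x hx)] with w hw using hS w hw)
    have := hd.comp x (hasDerivAt_distFun hqi hqc hx)
    rwa [← div_eq_inv_mul] at this
  · have := congrArg (distFun a p) h
    simp only [hS _ (hmem x hx), hS _ (hmem y hy)] at this
    exact (strictMonoOn_distFun hqi hqc hq).injOn hx hy this

end distFun
lemma exists_ge_abs_le_of_integrableOn {B : ℝ → ℝ} {K δ : ℝ} (hB : IntegrableOn B (Set.Ioi K))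
    (hδ : 0 < δ) : ∃ x > K, |B x| ≤ δ := by
  by_contra! h
  have hc : IntegrableOn (fun _ : ℝ => δ) (Set.Ioi K) := by
    refine Integrable.mono' hB.abs aestronglyMeasurable_const ?_
    filter_upwards [ae_restrict_mem measurableSet_Ioi] with x hx
    rw [Real.norm_eq_abs, abs_of_pos hδ]
    exact (h x hx).le
  rw [integrableOn_const_iff] at hc
  simp [hδ.ne'] at hc

lemma exists_le_abs_le_of_integrable {B : ℝ → ℝ} {K δ : ℝ} (hB : Integrable B)
    (hδ : 0 < δ) : ∃ x < K, |B x| ≤ δ := by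
  obtain ⟨x, hx, h⟩ := exists_ge_abs_le_of_integrableOn (K := -K) hB.comp_neg.integrableOn hδ
  exact ⟨-x, by linarith, h⟩

lemma neg_le_intervalIntegral_of_hasDerivAt {a α β : ℝ} {B B' R : ℝ → ℝ} (hα : α ∈ halfLine a)
    (hαβ : α ≤ β)
    (hRc : ContinuousOn R (halfLine a)) (hRi : IntegrableOn R (halfLine a))
    (hB : ∀ x ∈ halfLine a, HasDerivAt B (B' x) x) (hBR : ∀ x ∈ halfLine a, 0 ≤ B' x + R x) :
    B α - B β ≤ ∫ x in α..β, R x := by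
  have hd : ∀ x ∈ halfLine a, HasDerivAt (fun x => distFun a R x + B x) (R x + B' x) x :=
    fun x hx => (hasDerivAt_distFun hRi hRc hx).add (hB x hx)
  have hsub : Set.Icc α β ⊆ halfLine a := fun x hx => halfLine_mono hα hx.1
  have hmono : MonotoneOn (fun x => distFun a R x + B x) (Set.Icc α β) := by
    refine monotoneOn_of_deriv_nonneg (convex_Icc α β)
      (fun x hx => (hd x (hsub hx)).continuousAt.continuousWithinAt)
      (fun x hx => (hd x (hsub (interior_subset hx))).differentiableAt.differentiableWithinAt)
      (fun x hx => ?_)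
    rw [(hd x (hsub (interior_subset hx))).deriv, add_comm]
    exact hBR x (hsub (interior_subset hx))
  have h := hmono (Set.left_mem_Icc.2 hαβ) (Set.right_mem_Icc.2 hαβ) hαβ
  have h2 := distFun_sub hRi α β
  have h3 : ∫ t in α..β, (halfLine a).indicator R t = ∫ t in α..β, R t := by
    refine intervalIntegral.integral_congr fun x hx => ?_
    rw [Set.uIcc_of_le hαβ] at hx
    exact Set.indicator_of_mem (hsub hx) _
  simp only at h
  linarith

lemma setIntegral_nonneg_of_hasDerivAt {a : ℝ} {B B' R : ℝ → ℝ}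
    (hRc : ContinuousOn R (halfLine a)) (hRi : IntegrableOn R (halfLine a))
    (hB : ∀ x ∈ halfLine a, HasDerivAt B (B' x) x) (hBR : ∀ x ∈ halfLine a, 0 ≤ B' x + R x)
    (hBi : IntegrableOn B (halfLine a)) (hB0 : 0 < a → ∀ x ∈ halfLine a, 0 ≤ B x) :
    0 ≤ ∫ x in halfLine a, R x := by
  have hδ : ∀ k : ℕ, (0 : ℝ) < 1 / (k + 1) := fun k => Nat.one_div_pos_of_nat
  have hα : ∃ α : ℕ → ℝ, (∀ k, α k ∈ halfLine a ∧ α k ≤ 1 ∧ -(1 / ((k : ℝ) + 1)) ≤ B (α k)) ∧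
      ∀ x ∈ halfLine a, ∀ᶠ k in atTop, α k < x := by
    by_cases ha : 0 < a
    · refine ⟨fun k => 1 / ((k : ℝ) + 1), fun k => ⟨fun _ => hδ k, ?_, ?_⟩, fun x hx => ?_⟩
      · rw [div_le_one (by positivity)]; linarith [(Nat.cast_nonneg k : (0 : ℝ) ≤ k)]
      · exact (neg_nonpos.2 (hδ k).le).trans (hB0 ha _ fun _ => hδ k)
      · exact tendsto_one_div_add_atTop_nhds_zero_nat.eventually_lt_const (hx ha)
    · have hu := halfLine_of_nonpos (not_lt.1 ha)
      rw [hu, integrableOn_univ] at hBi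
      choose α h1 h2 using fun k : ℕ => exists_le_abs_le_of_integrable (K := -(k : ℝ)) hBi (hδ k)
      refine ⟨α, fun k => ⟨by simp [hu], ?_, neg_le_of_abs_le (h2 k)⟩, fun x _ => ?_⟩
      · linarith [h1 k, (Nat.cast_nonneg k : (0 : ℝ) ≤ k)]
      · filter_upwards [eventually_ge_atTop ⌈-x⌉₊] with k hk
        linarith [h1 k, Nat.le_ceil (-x), (Nat.cast_le.2 hk : ((⌈-x⌉₊ : ℕ) : ℝ) ≤ k)]
  obtain ⟨α, hα, hαx⟩ := hα
  have hBk : ∀ k : ℕ, IntegrableOn B (Set.Ioi ((k : ℝ) + 1)) := fun k =>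
    hBi.mono_set fun x hx _ => lt_trans (by positivity) hx
  choose β hβ hβB using fun k : ℕ => exists_ge_abs_le_of_integrableOn (hBk k) (hδ k)
  have hαβ : ∀ k, α k ≤ β k := fun k => by
    linarith [(hα k).2.1, hβ k, (Nat.cast_nonneg k : (0 : ℝ) ≤ k)]
  have hcov : AECover (volume.restrict (halfLine a)) atTop (fun k => Set.Ioc (α k) (β k)) := by
    refine ⟨?_, fun k => measurableSet_Ioc⟩
    filter_upwards [ae_restrict_mem (measurableSet_halfLine a)] with x hx
    filter_upwards [hαx x hx, eventually_ge_atTop ⌈x⌉₊] with k hk hk2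
    refine ⟨hk, ?_⟩
    linarith [hβ k, Nat.le_ceil x, (Nat.cast_le.2 hk2 : ((⌈x⌉₊ : ℕ) : ℝ) ≤ k)]
  have hlim := hcov.integral_tendsto_of_countably_generated hRi
  have hlow : Tendsto (fun k : ℕ => -(2 * (1 / ((k : ℝ) + 1)))) atTop (𝓝 0) := by
    simpa using (tendsto_one_div_add_atTop_nhds_zero_nat (𝕜 := ℝ)).const_mul (-2)
  refine le_of_tendsto_of_tendsto' hlow hlim fun k => ?_
  rw [Measure.restrict_restrict measurableSet_Ioc, Set.inter_eq_left.2
    (fun x hx => halfLine_mono (hα k).1 hx.1.le), ← intervalIntegral.integral_of_le (hαβ k)]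
  have := neg_le_intervalIntegral_of_hasDerivAt (hα k).1 (hαβ k) hRc hRi hB hBR
  linarith [(hα k).2.2, le_of_abs_le (hβB k)]

/-- The pointwise inequality behind the transport proof of the logarithmic Sobolev inequality. -/
lemma transport_pointwise {a b ε c x T g g' : ℝ} (ha : 0 ≤ a) (hb : 0 < b) (hε : 0 < ε)
    (hc : 0 < c) (hx : x ∈ halfLine a) (hT : T ∈ halfLine a) :
    let e := exp (-b * x ^ 2)
    let u := ε * e + g ^ 2
    let w := |x| ^ a
    let h := ε + g ^ 2 * exp (b * x ^ 2)
    let T' := c * (u * w) / (exp (-b * T ^ 2) * |T| ^ a)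
    0 ≤ (ε * (e * (-b * (2 * x))) + 2 * g * g') * (w * T) + u * ((a * w / x) * T + w * T') +
      (w * ((g' ^ 2 + ε * b ^ 2 * x ^ 2 * e) / b + (b * x ^ 2 - (a + 1)) * u)
        - u * w * (log h + log c)) := by
  intro e u w h T'
  have he : 0 < e := exp_pos _
  have hu : 0 < u := by positivity
  have hpos : ∀ y ∈ halfLine a, 0 < |y| ^ a := fun y hy => by
    by_cases h0 : 0 < a
    · exact rpow_pos_of_pos (abs_pos.2 (hy h0).ne') _
    · rw [le_antisymm (not_lt.1 h0) ha, rpow_zero]; exact one_pos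
  have hw : 0 < w := hpos x hx
  have hwT := hpos T hT
  have hh : u = h * e := by
    simp only [u, h, e, add_mul, mul_assoc, ← exp_add]; simp
  have hhpos : 0 < h := by positivity
  have hT' : 0 < T' := by positivity
  have hlog : log T' = log c + (log h - b * x ^ 2 + log w) + b * T ^ 2 - log (|T| ^ a) := by
    simp only [T']
    rw [log_div (by positivity) (by positivity), log_mul hc.ne' (by positivity),
      log_mul hu.ne' hw.ne', hh, log_mul hhpos.ne' he.ne', log_mul (exp_pos _).ne' hwT.ne',
      log_exp, log_exp]
    ring
  have hw' : log (|T| ^ a) - log w ≤ a * (T / x) - a := by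
    by_cases h0 : 0 < a
    · have hx0 := hx h0
      have hT0 := hT h0
      rw [log_rpow (abs_pos.2 hT0.ne'), log_rpow (abs_pos.2 hx0.ne'), abs_of_pos hT0,
        abs_of_pos hx0, ← mul_sub, ← log_div hT0.ne' hx0.ne']
      have := log_le_sub_one_of_pos (div_pos hT0 hx0)
      nlinarith
    · simp [w, le_antisymm (not_lt.1 h0) ha]
  have hT1 := log_le_sub_one_of_pos hT'
  have key : log h + log c ≤ T' - 1 + b * x ^ 2 - b * T ^ 2 + (a * (T / x) - a) := by linarith
  have key2 := mul_le_mul_of_nonneg_left key (mul_pos hu hw).le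
  have hsq : 0 ≤ w * ((g' + b * g * T) ^ 2 / b + ε * e * b * (x - T) ^ 2) := by positivity
  have hid : (ε * (e * (-b * (2 * x))) + 2 * g * g') * (w * T) +
      w * ((g' ^ 2 + ε * b ^ 2 * x ^ 2 * e) / b) + u * w * (b * T ^ 2) =
      w * ((g' + b * g * T) ^ 2 / b + ε * e * b * (x - T) ^ 2) := by
    simp only [u]; field_simp; ring
  have hd : a * w / x * T = w * (a * (T / x)) := by ring
  rw [hd]
  linarith
/-- The one-dimensional Gaussian monomial density `exp (-b x²) |x|^a`. -/
def gaussMon (a b x : ℝ) : ℝ := exp (-b * x ^ 2) * |x| ^ a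

/-- The mass of `gaussMon` on `halfLine a`. -/
def gaussMass (a b : ℝ) : ℝ := ∫ x in halfLine a, gaussMon a b x

/-- The probability measure on `halfLine a` with density proportional to `gaussMon a b`. -/
def gaussMeas (a b : ℝ) : Measure ℝ :=
  (volume.restrict (halfLine a)).withDensity
    fun x => ((gaussMon a b x / gaussMass a b).toNNReal : ENNReal)

section gaussMon

variable {a b : ℝ}

lemma gaussMon_nonneg (x : ℝ) : 0 ≤ gaussMon a b x := by unfold gaussMon; positivity

lemma abs_rpow_pos_of_mem_halfLine (ha : 0 ≤ a) {x : ℝ} (hx : x ∈ halfLine a) : 0 < |x| ^ a := by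
  by_cases h0 : 0 < a
  · exact rpow_pos_of_pos (abs_pos.2 (hx h0).ne') _
  · rw [le_antisymm (not_lt.1 h0) ha, rpow_zero]; exact one_pos

lemma gaussMon_pos (ha : 0 ≤ a) {x : ℝ} (hx : x ∈ halfLine a) : 0 < gaussMon a b x :=
  mul_pos (exp_pos _) (abs_rpow_pos_of_mem_halfLine ha hx)

lemma continuous_gaussMon (ha : 0 ≤ a) : Continuous (gaussMon a b) := by
  unfold gaussMon
  exact (by fun_prop : Continuous fun x : ℝ => exp (-b * x ^ 2)).mul
    (continuous_abs.rpow_const fun _ => Or.inr ha)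

lemma integrable_gaussMon (ha : 0 ≤ a) (hb : 0 < b) : Integrable (gaussMon a b) := by
  have h : IntegrableOn (gaussMon a b) (Set.Ioi 0) := by
    refine (integrableOn_rpow_mul_exp_neg_mul_sq hb (by linarith : -1 < a)).congr_fun
      (fun x hx => ?_) measurableSet_Ioi
    simp only [gaussMon, abs_of_pos (Set.mem_Ioi.1 hx)]
    ring
  rw [← integrableOn_univ, ← Set.Iio_union_Ici (a := (0 : ℝ)), integrableOn_union,
    integrableOn_Ici_iff_integrableOn_Ioi]
  refine ⟨?_, h⟩
  rw [← (Measure.measurePreserving_neg (volume : Measure ℝ)).integrableOn_comp_preimage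
    (Homeomorph.neg ℝ).measurableEmbedding]
  have he : gaussMon a b ∘ Neg.neg = gaussMon a b := by
    funext x; simp only [Function.comp_apply, gaussMon, neg_sq, abs_neg]
  simpa only [he, Set.neg_preimage, Set.neg_Iio, neg_zero] using h

lemma gaussMass_eq (ha : 0 ≤ a) (hb : 0 < b) :
    gaussMass a b = b ^ (-(a + 1) / 2) * (Gamma ((a + 1) / 2) / if 0 < a then 2 else 1) := by
  unfold gaussMass gaussMon
  split_ifs with h0
  · have h := integral_rpow_mul_exp_neg_mul_rpow (p := 2) (q := a) two_pos (by linarith) hb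
    rw [halfLine_of_pos h0, ← setIntegral_congr_fun measurableSet_Ioi (g := _) (fun x hx => ?_)]
    · rw [h]; ring_nf
    · simp only [Set.mem_Ioi] at hx
      simp only [abs_of_pos hx, rpow_two]
      ring
  · have ha0 := le_antisymm (not_lt.1 h0) ha
    rw [halfLine_of_nonpos (not_lt.1 h0), ha0]
    simp only [rpow_zero, mul_one, Measure.restrict_univ, integral_gaussian]
    rw [zero_add, Gamma_one_half_eq, div_eq_mul_inv, sqrt_mul pi_pos.le, sqrt_inv, sqrt_eq_rpow b,
      ← rpow_neg hb.le]
    ring_nf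

lemma gaussMass_pos (ha : 0 ≤ a) (hb : 0 < b) : 0 < gaussMass a b := by
  rw [gaussMass_eq ha hb]
  have := Gamma_pos_of_pos (by linarith : 0 < (a + 1) / 2)
  split_ifs <;> positivity

lemma measurable_gaussDensity (ha : 0 ≤ a) :
    Measurable fun x => (gaussMon a b x / gaussMass a b).toNNReal :=
  ((continuous_gaussMon ha).measurable.div_const _).real_toNNReal

lemma gaussDensity_coe (ha : 0 ≤ a) (hb : 0 < b) (x : ℝ) :
    ((gaussMon a b x / gaussMass a b).toNNReal : ℝ) = gaussMon a b x / gaussMass a b :=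
  Real.coe_toNNReal _ (div_nonneg (gaussMon_nonneg x) (gaussMass_pos ha hb).le)

lemma integral_gaussMeas (ha : 0 ≤ a) (hb : 0 < b) (F : ℝ → ℝ) :
    ∫ x, F x ∂gaussMeas a b = (∫ x in halfLine a, gaussMon a b x * F x) / gaussMass a b := by
  unfold gaussMeas
  rw [integral_withDensity_eq_integral_smul (measurable_gaussDensity ha), ← integral_div]
  refine integral_congr_ae (Eventually.of_forall fun x => ?_)
  simp only [NNReal.smul_def, gaussDensity_coe ha hb, smul_eq_mul]
  ring

lemma integrable_gaussMeas (ha : 0 ≤ a) (hb : 0 < b) {F : ℝ → ℝ} :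
    Integrable F (gaussMeas a b) ↔ IntegrableOn (fun x => gaussMon a b x * F x) (halfLine a) := by
  unfold gaussMeas
  rw [integrable_withDensity_iff_integrable_smul (measurable_gaussDensity ha), IntegrableOn]
  refine Iff.trans ?_ (integrable_const_mul_iff (c := (gaussMass a b)⁻¹)
    (IsUnit.mk0 _ (inv_ne_zero (gaussMass_pos ha hb).ne')) _)
  refine integrable_congr (Eventually.of_forall fun x => ?_)
  simp only [NNReal.smul_def, gaussDensity_coe ha hb, smul_eq_mul]
  ring

lemma isProbabilityMeasure_gaussMeas (ha : 0 ≤ a) (hb : 0 < b) :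
    IsProbabilityMeasure (gaussMeas a b) := by
  have hm := gaussMass_pos ha hb
  refine ⟨?_⟩
  have hint : ∫ x in halfLine a, gaussMon a b x / gaussMass a b = 1 := by
    rw [integral_div]; exact div_self hm.ne'
  rw [gaussMeas, withDensity_apply _ MeasurableSet.univ, Measure.restrict_univ]
  change ∫⁻ x in halfLine a, ENNReal.ofReal (gaussMon a b x / gaussMass a b) = 1
  rw [← ofReal_integral_eq_lintegral_ofReal ((integrable_gaussMon ha hb).integrableOn.div_const _)
    (Eventually.of_forall fun x => div_nonneg (gaussMon_nonneg x) hm.le), hint, ENNReal.ofReal_one]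

lemma integrable_sq_mul_gaussMon (ha : 0 ≤ a) (hb : 0 < b) :
    Integrable fun x => gaussMon a b x * x ^ 2 := by
  refine (integrable_gaussMon (a := a + 2) (by linarith) hb).congr
    (Eventually.of_forall fun x => ?_)
  simp only [gaussMon, rpow_add' (abs_nonneg x) (by linarith : a + 2 ≠ 0), rpow_two, sq_abs,
    mul_assoc]

lemma integrable_sq_gaussMeas (ha : 0 ≤ a) (hb : 0 < b) :
    Integrable (fun x => x ^ 2) (gaussMeas a b) :=
  (integrable_gaussMeas ha hb).2 (integrable_sq_mul_gaussMon ha hb).integrableOn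

lemma hasDerivAt_abs_rpow_of_mem_halfLine (ha : 0 ≤ a) {x : ℝ} (hx : x ∈ halfLine a) :
    HasDerivAt (fun x => |x| ^ a) (a * |x| ^ a / x) x := by
  by_cases h0 : 0 < a
  · have hx0 := hx h0
    have h : HasDerivAt (fun x => x ^ a) (a * |x| ^ a / x) x := by
      have := hasDerivAt_rpow_const (x := x) (p := a) (Or.inl hx0.ne')
      rw [rpow_sub_one hx0.ne', ← mul_div_assoc] at this
      rwa [abs_of_pos hx0]
    refine h.congr_of_eventuallyEq ?_
    filter_upwards [lt_mem_nhds hx0] with y hy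
    rw [abs_of_pos hy]
  · simp only [le_antisymm (not_lt.1 h0) ha, rpow_zero, zero_mul, zero_div]
    exact hasDerivAt_const x 1

end gaussMon

/-- The entropy functional `∫ h log h - (∫ h) log (∫ h)`. -/
def ent {X : Type*} [MeasurableSpace X] (μ : Measure X) (h : X → ℝ) : ℝ :=
  ∫ x, h x * log (h x) ∂μ - (∫ x, h x ∂μ) * log (∫ x, h x ∂μ)
/-- The logarithmic Sobolev inequality on the half line, for `h = ε + g² exp (b x²)`. -/
lemma ent_gaussMeas_le {a b ε : ℝ} (ha : 0 ≤ a) (hb : 0 < b) (hε : 0 < ε) {g : ℝ → ℝ}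
    (hg : ContDiff ℝ 1 g) (hgs : HasCompactSupport g) :
    ent (gaussMeas a b) (fun x => ε + g x ^ 2 * exp (b * x ^ 2)) ≤
      ∫ x, (((deriv g x) ^ 2 * exp (b * x ^ 2) + ε * b ^ 2 * x ^ 2) / b +
        (b * x ^ 2 - (a + 1)) * (ε + g x ^ 2 * exp (b * x ^ 2))) ∂gaussMeas a b := by
  have := isProbabilityMeasure_gaussMeas ha hb
  set μ := gaussMeas a b with hμ
  set h : ℝ → ℝ := fun x => ε + g x ^ 2 * exp (b * x ^ 2) with hh
  set ρ : ℝ → ℝ := fun x => ((deriv g x) ^ 2 * exp (b * x ^ 2) + ε * b ^ 2 * x ^ 2) / b +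
        (b * x ^ 2 - (a + 1)) * h x with hρ
  have hgc := hg.continuous
  have hg'c : Continuous (deriv g) := hg.continuous_deriv le_rfl
  have hg's : HasCompactSupport (deriv g) := hgs.deriv
  have hhc : Continuous h := by fun_prop
  have hhpos : ∀ x, 0 < h x := fun x => by simp only [hh]; positivity
  have hcs : ∀ F : ℝ → ℝ, Continuous F → (∀ x, g x = 0 → F x = 0) → Integrable F μ :=
    fun F hF h0 => hF.integrable_of_hasCompactSupport
      (hgs.mono fun x hx hgx => hx (h0 x hgx))
  have hx2 : Integrable (fun x => x ^ 2) μ := integrable_sq_gaussMeas ha hb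
  have ih : Integrable h μ :=
    (integrable_const ε).add (hcs (fun x => g x ^ 2 * exp (b * x ^ 2)) (by fun_prop)
      fun x hx => by simp [hx])
  have ihl : Integrable (fun x => h x * log (h x)) μ := by
    have h1 := (integrable_const (ε * log ε)).add (hcs (fun x => h x * log (h x) - ε * log ε)
      ((hhc.mul (hhc.log fun x => (hhpos x).ne')).sub continuous_const)
      fun x hx => by simp [hh, hx])
    refine h1.congr (Eventually.of_forall fun x => ?_)
    simp
  have iρ : Integrable ρ μ := by
    have h1 : Integrable (fun x => (deriv g x) ^ 2 * exp (b * x ^ 2)) μ :=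
      Continuous.integrable_of_hasCompactSupport (by fun_prop)
        (hg's.mono fun x hx hgx => hx (by simp [hgx]))
    have h2 : Integrable (fun x => (b * x ^ 2 - (a + 1)) * h x) μ := by
      have h3 := (((hx2.const_mul b).sub (integrable_const (a + 1))).mul_const ε).add
        (hcs (fun x => (b * x ^ 2 - (a + 1)) * (g x ^ 2 * exp (b * x ^ 2))) (by fun_prop)
          fun x hx => by simp [hx])
      refine h3.congr (Eventually.of_forall fun x => ?_)
      simp only [hh, Pi.add_apply, Pi.sub_apply]; ring
    exact ((h1.add (hx2.const_mul (ε * b ^ 2))).div_const b).add h2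
  set Z := gaussMass a b with hZ
  have hZpos : 0 < Z := gaussMass_pos ha hb
  set m := ∫ x, h x ∂μ with hm
  have hmpos : 0 < m := by
    have : ∫ _, ε ∂μ ≤ m := integral_mono (integrable_const _) ih fun x => by
      simp only [hh]; have : 0 ≤ g x ^ 2 * exp (b * x ^ 2) := by positivity
      linarith
    simp only [integral_const, probReal_univ, one_smul] at this
    linarith
  set p := gaussMon a b with hp
  have hpc : Continuous p := continuous_gaussMon ha
  have ihp := (integrable_gaussMeas ha hb).1 ih
  set q : ℝ → ℝ := fun x => m⁻¹ * (p x * h x) with hq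
  have hpq : ∫ x in halfLine a, q x = ∫ x in halfLine a, p x := by
    have h1 : m = (∫ x in halfLine a, p x * h x) / Z := integral_gaussMeas ha hb h
    rw [eq_div_iff hZpos.ne'] at h1
    simp only [hq]
    rw [integral_const_mul, ← h1, inv_mul_cancel_left₀ hmpos.ne']
    rfl
  obtain ⟨T, hT, hTinj⟩ := exists_transport (a := a) (p := p) (q := q)
    (integrable_gaussMon ha hb).integrableOn hpc.continuousOn (fun x hx => gaussMon_pos ha hx)
    (ihp.const_mul _) (by fun_prop)
    (fun x hx => mul_pos (inv_pos.2 hmpos) (mul_pos (gaussMon_pos ha hx) (hhpos x))) hpq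
  have hTc : ContinuousOn T (halfLine a) :=
    fun x hx => (hT x hx).2.continuousAt.continuousWithinAt
  set u : ℝ → ℝ := fun x => ε * exp (-b * x ^ 2) + g x ^ 2 with hu
  have hph : ∀ x, p x * h x = u x * |x| ^ a := fun x => by
    have : exp (b * x ^ 2) * exp (-b * x ^ 2) = 1 := by rw [← exp_add]; simp
    simp only [hp, gaussMon, hh, hu]
    linear_combination (g x ^ 2 * |x| ^ a) * this
  set B : ℝ → ℝ := fun x => u x * (|x| ^ a * T x) with hB
  set R : ℝ → ℝ := fun x => p x * (ρ x - h x * log (h x) - log m⁻¹ * h x) with hR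
  have hRi : IntegrableOn R (halfLine a) :=
    (integrable_gaussMeas ha hb).1 ((iρ.sub ihl).sub (ih.const_mul (log m⁻¹)))
  have hRc : Continuous R := by
    have : Continuous fun x => log (h x) := hhc.log fun x => (hhpos x).ne'
    fun_prop
  have hTi : IntegrableOn (fun x => p x * |x|) (halfLine a) := by
    refine (integrable_gaussMeas ha hb).1 ((hx2.add (integrable_const 1)).mono'
      continuous_abs.aestronglyMeasurable (Eventually.of_forall fun x => ?_))
    rw [Real.norm_eq_abs, abs_abs]
    simp only [Pi.add_apply]
    nlinarith [sq_nonneg (|x| - 1), sq_abs x]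
  have hBi : IntegrableOn B (halfLine a) := by
    have h1 := (integrableOn_image_iff_integrableOn_abs_deriv_smul (measurableSet_halfLine a)
      (fun x hx => (hT x hx).2.hasDerivWithinAt) hTinj (fun x => p x * |x|)).1
      (hTi.mono_set (Set.image_subset_iff.2 fun x hx => (hT x hx).1))
    refine (h1.const_mul m).mono' ?_ ?_
    · have : Continuous fun x : ℝ => |x| ^ a := continuous_abs.rpow_const fun _ => Or.inr ha
      exact ContinuousOn.aestronglyMeasurable (by fun_prop) (measurableSet_halfLine a)
    · filter_upwards [ae_restrict_mem (measurableSet_halfLine a)] with x hx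
      have hpT : 0 < p (T x) := gaussMon_pos ha (hT x hx).1
      have hq0 : 0 ≤ q x := mul_nonneg (inv_pos.2 hmpos).le
        (mul_nonneg (gaussMon_nonneg x) (hhpos x).le)
      rw [smul_eq_mul, abs_of_nonneg (div_nonneg hq0 hpT.le), Real.norm_eq_abs]
      have : q x / p (T x) * (p (T x) * |T x|) = q x * |T x| := by field_simp
      rw [this]
      simp only [hB, hq]
      rw [← mul_assoc, ← hph, abs_mul, abs_of_nonneg (mul_nonneg (gaussMon_nonneg x) (hhpos x).le),
        ← mul_assoc, mul_inv_cancel_left₀ hmpos.ne']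
  have hR0 : 0 ≤ ∫ x in halfLine a, R x := by
    refine setIntegral_nonneg_of_hasDerivAt (B := B) (B' := fun x =>
      (ε * (exp (-b * x ^ 2) * (-b * (2 * x))) + 2 * g x * deriv g x) * (|x| ^ a * T x) +
        u x * ((a * |x| ^ a / x) * T x + |x| ^ a * (q x / p (T x))))
      hRc.continuousOn hRi (fun x hx => ?_) (fun x hx => ?_) hBi (fun h0 x hx => ?_)
    · have h1 : HasDerivAt u
          (ε * (exp (-b * x ^ 2) * (-b * (2 * x))) + 2 * g x * deriv g x) x := by
        have h2 : HasDerivAt g (deriv g x) x :=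
          ((hg.differentiable one_ne_zero) x).hasDerivAt
        have h3 : HasDerivAt (fun x : ℝ => -b * x ^ 2) (-b * (2 * x)) x := by
          simpa using (hasDerivAt_pow 2 x).const_mul (-b)
        exact ((h3.exp.const_mul ε).add (h2.pow 2)).congr_deriv (by simp)
      exact h1.mul ((hasDerivAt_abs_rpow_of_mem_halfLine ha hx).mul (hT x hx).2)
    · have h1 := transport_pointwise (g := g x) (g' := deriv g x) ha hb hε (inv_pos.2 hmpos) hx
        (hT x hx).1
      refine h1.trans_eq ?_
      have h2 : exp (-b * x ^ 2) * exp (b * x ^ 2) = 1 := by rw [← exp_add]; simp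
      have h3 : R x = |x| ^ a * ((deriv g x ^ 2 + ε * b ^ 2 * x ^ 2 * exp (-b * x ^ 2)) / b
          + (b * x ^ 2 - (a + 1)) * u x) - u x * |x| ^ a * (log (h x) + log m⁻¹) := by
        have h4 : R x = |x| ^ a * ((deriv g x ^ 2 * (exp (-b * x ^ 2) * exp (b * x ^ 2))
            + ε * b ^ 2 * x ^ 2 * exp (-b * x ^ 2)) / b)
            + (b * x ^ 2 - (a + 1) - log (h x) - log m⁻¹) * (p x * h x) := by
          simp only [hR, hρ, hp, gaussMon]; ring
        rw [h4, h2, hph]; ring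
      rw [h3]
      simp only [hq, hph]
      rfl
    · have := (hT x hx).1 h0
      simp only [hB, hu]; positivity
  have hfin : ∫ x, (ρ x - h x * log (h x) - log m⁻¹ * h x) ∂μ =
      (∫ x in halfLine a, R x) / Z := integral_gaussMeas ha hb _
  have hsplit : ∫ x, (ρ x - h x * log (h x) - log m⁻¹ * h x) ∂μ =
      ∫ x, ρ x ∂μ - ∫ x, h x * log (h x) ∂μ - log m⁻¹ * m := by
    rw [← integral_const_mul, ← integral_sub iρ ihl]
    exact integral_sub (iρ.sub ihl) (ih.const_mul _)
  rw [hsplit, log_inv] at hfin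
  have : 0 ≤ (∫ x in halfLine a, R x) / Z := div_nonneg hR0 hZpos.le
  simp only [ent]
  rw [← hm]
  linarith
section tensorization

variable {X Y : Type*} [MeasurableSpace X] [MeasurableSpace Y]

lemma integral_sub_sub {μ : Measure X} {f g k : X → ℝ} (hf : Integrable f μ) (hg : Integrable g μ)
    (hk : Integrable k μ) :
    ∫ x, (f x - g x - k x) ∂μ = ∫ x, f x ∂μ - ∫ x, g x ∂μ - ∫ x, k x ∂μ := by
  rw [← integral_sub hf hg]
  exact integral_sub (hf.sub hg) hk

lemma integrable_mul_log {μ : Measure X} [IsFiniteMeasure μ] {f k : X → ℝ} {ε K : ℝ} (hε : 0 < ε)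
    (hf : Measurable f) (hk : Measurable k) (hfb : ∀ x, f x ∈ Set.Icc ε K)
    (hkb : ∀ x, k x ∈ Set.Icc ε K) : Integrable (fun x => f x * log (k x)) μ := by
  refine Integrable.of_bound (hf.mul hk.log).aestronglyMeasurable (K * (|log ε| + |log K|))
    (Eventually.of_forall fun x => ?_)
  have hfx := hfb x
  have hkx := hkb x
  rw [norm_mul, Real.norm_eq_abs, Real.norm_eq_abs, abs_of_pos (hε.trans_le hfx.1)]
  have h1 := log_le_log hε hkx.1
  have h2 := log_le_log (hε.trans_le hkx.1) hkx.2
  refine mul_le_mul hfx.2 ?_ (abs_nonneg _) (hε.le.trans (hfx.1.trans hfx.2))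
  rw [abs_le]
  constructor <;>
  linarith [neg_abs_le (log ε), le_abs_self (log K), abs_nonneg (log ε), abs_nonneg (log K)]

lemma integrable_of_mem_Icc {μ : Measure X} [IsFiniteMeasure μ] {f : X → ℝ} {ε K : ℝ}
    (hf : Measurable f) (hfb : ∀ x, f x ∈ Set.Icc ε K) : Integrable f μ :=
  Integrable.of_bound hf.aestronglyMeasurable (max |ε| |K|)
    (Eventually.of_forall fun x => abs_le_max_abs_abs (hfb x).1 (hfb x).2)

lemma integral_mem_Icc {μ : Measure X} [IsProbabilityMeasure μ] {f : X → ℝ} {ε K : ℝ}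
    (hf : Measurable f) (hfb : ∀ x, f x ∈ Set.Icc ε K) : ∫ x, f x ∂μ ∈ Set.Icc ε K := by
  have hi := integrable_of_mem_Icc (μ := μ) hf hfb
  constructor
  · simpa using integral_mono (integrable_const (μ := μ) ε) hi fun x => (hfb x).1
  · simpa using integral_mono hi (integrable_const (μ := μ) K) fun x => (hfb x).2

/-- The Gibbs variational inequality. -/
lemma integral_mul_log_le_ent {μ : Measure X} [IsProbabilityMeasure μ] {f k : X → ℝ} {ε K : ℝ}
    (hε : 0 < ε) (hf : Measurable f) (hk : Measurable k) (hfb : ∀ x, f x ∈ Set.Icc ε K)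
    (hkb : ∀ x, k x ∈ Set.Icc ε K) :
    ∫ x, f x * log (k x) ∂μ - (∫ x, f x ∂μ) * log (∫ x, k x ∂μ) ≤ ent μ f := by
  have if' := integrable_of_mem_Icc (μ := μ) hf hfb
  have ik := integrable_of_mem_Icc (μ := μ) hk hkb
  have ifk := integrable_mul_log (μ := μ) hε hf hk hfb hkb
  have iff' := integrable_mul_log (μ := μ) hε hf hf hfb hfb
  have hM := hε.trans_le (integral_mem_Icc (μ := μ) hf hfb).1
  have hm := hε.trans_le (integral_mem_Icc (μ := μ) hk hkb).1
  unfold ent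
  set M := ∫ x, f x ∂μ with hMdef
  set m := ∫ x, k x ∂μ with hmdef
  have hpt : ∀ x, f x * log (k x) - f x * log (f x) ≤
      f x * (log m - log M) + (M / m * k x - f x) := fun x => by
    have hfx := hε.trans_le (hfb x).1
    have hkx := hε.trans_le (hkb x).1
    have h := log_le_sub_one_of_pos (x := M / m * k x / f x) (by positivity)
    rw [log_div (by positivity) hfx.ne', log_mul (by positivity) hkx.ne',
      log_div hM.ne' hm.ne'] at h
    have h2 := mul_le_mul_of_nonneg_left h hfx.le
    have h3 : f x * (M / m * k x / f x - 1) = M / m * k x - f x := by field_simp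
    linarith
  have h : ∫ x, (f x * log (k x) - f x * log (f x) - f x * (log m - log M)) ∂μ ≤
      ∫ x, (M / m * k x - f x) ∂μ :=
    integral_mono ((ifk.sub iff').sub (if'.mul_const _)) ((ik.const_mul (M / m)).sub if')
      fun x => sub_le_iff_le_add'.2 (hpt x)
  rw [integral_sub_sub ifk iff' (if'.mul_const _), integral_mul_const,
    integral_sub (ik.const_mul _) if', integral_const_mul, ← hmdef, ← hMdef,
    div_mul_cancel₀ _ hm.ne'] at h
  linarith

lemma ent_prod_le {μ : Measure X} {ν : Measure Y} [IsProbabilityMeasure μ] [IsProbabilityMeasure ν]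
    {h R₁ R₂ : X × Y → ℝ} {ε K : ℝ} (hε : 0 < ε) (hh : Measurable h)
    (hb : ∀ z, h z ∈ Set.Icc ε K) (hR₁ : Integrable R₁ (μ.prod ν)) (hR₂ : Integrable R₂ (μ.prod ν))
    (h₁ : ∀ᵐ y ∂ν, ent μ (fun x => h (x, y)) ≤ ∫ x, R₁ (x, y) ∂μ)
    (h₂ : ∀ᵐ x ∂μ, ent ν (fun y => h (x, y)) ≤ ∫ y, R₂ (x, y) ∂ν) :
    ent (μ.prod ν) h ≤ ∫ z, R₁ z ∂μ.prod ν + ∫ z, R₂ z ∂μ.prod ν := by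
  set H : Y → ℝ := fun y => ∫ x, h (x, y) ∂μ with hH
  have hHm : Measurable H := (hh.stronglyMeasurable.integral_prod_left' (μ := μ)).measurable
  have hHb : ∀ y, H y ∈ Set.Icc ε K := fun y =>
    integral_mem_Icc (hh.comp measurable_prodMk_right) fun x => hb (x, y)
  have ih := integrable_of_mem_Icc (μ := μ.prod ν) hh hb
  have ihl := integrable_mul_log (μ := μ.prod ν) hε hh hh hb hb
  have ihH : Integrable (fun z : X × Y => h z * log (H z.2)) (μ.prod ν) :=
    integrable_mul_log hε hh (hHm.comp measurable_snd) hb fun z => hHb z.2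
  have hm : ∫ z, h z ∂μ.prod ν = ∫ y, H y ∂ν := integral_prod_symm h ih
  set m := ∫ z, h z ∂μ.prod ν with hmdef
  have e₁ : ∫ z, (h z * log (h z) - h z * log (H z.2) - R₁ z) ∂μ.prod ν ≤ 0 := by
    refine (integral_prod_symm _ ((ihl.sub ihH).sub hR₁)).trans_le
      (integral_nonpos_of_ae ?_)
    filter_upwards [h₁, hR₁.prod_left_ae] with y hy hi
    have hhy : Measurable fun x => h (x, y) := hh.comp measurable_prodMk_right
    have j₁ := integrable_mul_log (μ := μ) hε hhy hhy (fun x => hb (x, y)) fun x => hb (x, y)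
    have j₂ := (integrable_of_mem_Icc (μ := μ) hhy fun x => hb (x, y)).mul_const (log (H y))
    simp only [Pi.sub_apply, Pi.zero_apply]
    rw [integral_sub_sub j₁ j₂ hi, integral_mul_const]
    simp only [ent] at hy
    linarith
  have e₂ : ∫ z, (h z * log (H z.2) - h z * log m - R₂ z) ∂μ.prod ν ≤ 0 := by
    refine (integral_prod _ ((ihH.sub (ih.mul_const _)).sub hR₂)).trans_le
      (integral_nonpos_of_ae ?_)
    filter_upwards [h₂, hR₂.prod_right_ae] with x hx hi
    have hhx : Measurable fun y => h (x, y) := hh.comp measurable_prodMk_left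
    have j₁ := integrable_mul_log (μ := ν) hε hhx hHm (fun y => hb (x, y)) hHb
    have j₂ := (integrable_of_mem_Icc (μ := ν) hhx fun y => hb (x, y)).mul_const (log m)
    simp only [Pi.sub_apply, Pi.zero_apply]
    rw [integral_sub_sub j₁ j₂ hi, integral_mul_const]
    have hg := integral_mul_log_le_ent (μ := ν) hε hhx hHm (fun y => hb (x, y)) hHb
    rw [← hm] at hg
    linarith
  rw [integral_sub_sub ihl ihH hR₁] at e₁
  rw [integral_sub_sub ihH (ih.mul_const _) hR₂, integral_mul_const, ← hmdef] at e₂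
  unfold ent
  rw [← hmdef]
  linarith

lemma measurePreserving_finCons {n : ℕ} (μ : Fin (n + 1) → Measure ℝ)
    [∀ i, SigmaFinite (μ i)] :
    MeasurePreserving (fun z : ℝ × (Fin n → ℝ) => (Fin.cons z.1 z.2 : Fin (n + 1) → ℝ))
      ((μ 0).prod (Measure.pi fun j => μ j.succ)) (Measure.pi μ) := by
  have h := (measurePreserving_piFinSuccAbove μ 0).symm
  simp only [Fin.zero_succAbove] at h
  convert h using 1
  funext z
  simp [MeasurableEquiv.piFinSuccAbove_symm_apply, Fin.insertNthEquiv]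

lemma measurableEmbedding_finCons (n : ℕ) :
    MeasurableEmbedding (fun z : ℝ × (Fin n → ℝ) => (Fin.cons z.1 z.2 : Fin (n + 1) → ℝ)) := by
  convert (MeasurableEquiv.piFinSuccAbove (fun _ : Fin (n + 1) => ℝ) 0).symm.measurableEmbedding
    using 1
  funext z
  simp [MeasurableEquiv.piFinSuccAbove_symm_apply, Fin.insertNthEquiv]

/-- Tensorization: one-dimensional entropy bounds in each coordinate add up. -/
lemma ent_pi_le {n : ℕ} (μ : Fin n → Measure ℝ) [∀ i, IsProbabilityMeasure (μ i)]
    {h : (Fin n → ℝ) → ℝ} {r : Fin n → (Fin n → ℝ) → ℝ} {ε K : ℝ} (hε : 0 < ε) (hh : Measurable h)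
    (hb : ∀ x, h x ∈ Set.Icc ε K) (hr : ∀ i, Integrable (r i) (Measure.pi μ))
    (hle : ∀ i x, ent (μ i) (fun s => h (Function.update x i s)) ≤
      ∫ s, r i (Function.update x i s) ∂μ i) :
    ent (Measure.pi μ) h ≤ ∑ i, ∫ x, r i x ∂Measure.pi μ := by
  induction n with
  | zero =>
    have hint : ∀ F : (Fin 0 → ℝ) → ℝ, ∫ x, F x ∂Measure.pi μ = F 0 := fun F => by
      rw [Measure.pi_of_empty μ 0, integral_dirac]
    simp [ent, hint]
  | succ n ih =>
    have hmp := measurePreserving_finCons μ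
    have hemb := measurableEmbedding_finCons n
    have hint : ∀ F : (Fin (n + 1) → ℝ) → ℝ, ∫ x, F x ∂Measure.pi μ =
        ∫ z : ℝ × (Fin n → ℝ), F (Fin.cons z.1 z.2)
          ∂(μ 0).prod (Measure.pi fun j => μ j.succ) := fun F => (hmp.integral_comp hemb F).symm
    have hr' : ∀ i, Integrable (fun z : ℝ × (Fin n → ℝ) => r i (Fin.cons z.1 z.2))
        ((μ 0).prod (Measure.pi fun j => μ j.succ)) :=
      fun i => (hmp.integrable_comp_emb hemb).2 (hr i)
    have hent : ent (Measure.pi μ) h = ent ((μ 0).prod (Measure.pi fun j => μ j.succ))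
        fun z : ℝ × (Fin n → ℝ) => h (Fin.cons z.1 z.2) := by
      simp only [ent, hint]
    rw [hent, Fin.sum_univ_succ, hint (r 0)]
    have hsum : ∑ i : Fin n, ∫ x, r i.succ x ∂Measure.pi μ =
        ∫ z : ℝ × (Fin n → ℝ), ∑ i : Fin n, r i.succ (Fin.cons z.1 z.2)
          ∂(μ 0).prod (Measure.pi fun j => μ j.succ) := by
      rw [integral_finsetSum _ fun i _ => hr' i.succ]
      simp only [hint]
    rw [hsum]
    refine ent_prod_le hε (hh.comp hmp.measurable) (fun z => hb _) (hr' 0)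
      (integrable_finsetSum _ fun i _ => hr' i.succ) ?_ ?_
    · refine Eventually.of_forall fun y => ?_
      have := hle 0 (Fin.cons 0 y)
      simpa only [Fin.update_cons_zero] using this
    · filter_upwards [eventually_all.2 fun i : Fin n => (hr' i.succ).prod_right_ae] with x hx
      rw [integral_finsetSum _ fun i _ => hx i]
      refine ih (fun j => μ j.succ) (r := fun i y => r i.succ (Fin.cons x y))
        (hh.comp (hmp.measurable.comp measurable_prodMk_left)) (fun y => hb _) hx fun i y => ?_
      have := hle i.succ (Fin.cons x y)
      simpa only [← Fin.cons_update] using this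

end tensorization
section product

lemma lintegral_pi_prod_eq_prod {n : ℕ} (μ : Fin n → Measure ℝ) [∀ i, SigmaFinite (μ i)]
    {g : Fin n → ℝ → ENNReal} (hg : ∀ i, Measurable (g i)) :
    ∫⁻ x, ∏ i, g i (x i) ∂Measure.pi μ = ∏ i, ∫⁻ s, g i s ∂μ i := by
  induction n with
  | zero =>
    rw [Measure.pi_of_empty μ 0]
    simp
  | succ n ih =>
    rw [← (measurePreserving_finCons μ).lintegral_comp_emb (measurableEmbedding_finCons n)]
    simp only [Fin.prod_univ_succ, Fin.cons_zero, Fin.cons_succ]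
    rw [lintegral_prod_mul (f := g 0) (g := fun y : Fin n → ℝ => ∏ i : Fin n, g i.succ (y i))
      (hg 0).aemeasurable (Finset.measurable_prod _ fun i _ =>
        (hg i.succ).comp (measurable_pi_apply i)).aemeasurable,
      ih (fun i => μ i.succ) fun i => hg i.succ]

lemma pi_withDensity {n : ℕ} (μ : Fin n → Measure ℝ) [∀ i, SigmaFinite (μ i)]
    {g : Fin n → ℝ → ENNReal} (hg : ∀ i, Measurable (g i))
    [∀ i, SigmaFinite ((μ i).withDensity (g i))] :
    Measure.pi (fun i => (μ i).withDensity (g i)) =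
      (Measure.pi μ).withDensity fun x => ∏ i, g i (x i) := by
  refine Measure.pi_eq fun s hs => ?_
  rw [withDensity_apply _ (MeasurableSet.univ_pi hs), Measure.restrict_pi_pi,
    lintegral_pi_prod_eq_prod _ hg]
  exact Finset.prod_congr rfl fun i _ => (withDensity_apply _ (hs i)).symm

variable {n : ℕ} {A : Fin n → ℝ} {b : ℝ}

lemma monSet_eq_preimage : monSet A = WithLp.ofLp ⁻¹' Set.univ.pi fun i => halfLine (A i) := by
  ext x; simp [monSet, halfLine, Set.mem_pi]

lemma integral_pi_gaussMeas (hA : ∀ i, 0 ≤ A i) (hb : 0 < b) (F : (Fin n → ℝ) → ℝ) :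
    ∫ x, F x ∂Measure.pi (fun i => gaussMeas (A i) b) =
      (∏ i, gaussMass (A i) b)⁻¹ *
        ∫ x in monSet A, exp (-b * ∑ i, x i ^ 2) * F (WithLp.ofLp x) * monWeight A x := by
  have := fun i => isProbabilityMeasure_gaussMeas (hA i) hb
  have hm : ∀ i, Measurable fun x => (gaussMon (A i) b x / gaussMass (A i) b).toNNReal :=
    fun i => measurable_gaussDensity (hA i)
  have hpi : Measure.pi (fun i => gaussMeas (A i) b) =
      (volume.restrict (Set.univ.pi fun i => halfLine (A i))).withDensity fun x =>
        ((∏ i, (gaussMon (A i) b (x i) / gaussMass (A i) b).toNNReal : NNReal) : ENNReal) := by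
    unfold gaussMeas at this ⊢
    rw [pi_withDensity _ fun i => (hm i).coe_nnreal_ennreal, ← Measure.restrict_pi_pi, volume_pi]
    simp only [ENNReal.ofNNReal_finsetProd]
  have hmeas : Measurable fun x : Fin n → ℝ =>
      ∏ i, (gaussMon (A i) b (x i) / gaussMass (A i) b).toNNReal :=
    Finset.measurable_prod _ fun i _ => (hm i).comp (measurable_pi_apply i)
  rw [hpi, integral_withDensity_eq_integral_smul hmeas, monSet_eq_preimage,
    ← (PiLp.volume_preserving_ofLp (Fin n)).setIntegral_preimage_emb
      (MeasurableEquiv.toLp 2 (Fin n → ℝ)).symm.measurableEmbedding, ← integral_const_mul]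
  refine integral_congr_ae (Eventually.of_forall fun x => ?_)
  have he : ∀ i, ((gaussMon (A i) b (x i) / gaussMass (A i) b).toNNReal : ℝ) =
      gaussMon (A i) b (x i) / gaussMass (A i) b := fun i => gaussDensity_coe (hA i) hb _
  simp only [NNReal.smul_def, NNReal.coe_prod, smul_eq_mul, monWeight, he]
  simp only [Finset.prod_div_distrib, gaussMon, Finset.prod_mul_distrib,
    ← exp_sum, ← Finset.mul_sum]
  ring

lemma integral_pi_gaussMeas_exp_mul (hA : ∀ i, 0 ≤ A i) (hb : 0 < b) (F : (Fin n → ℝ) → ℝ) :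
    ∫ x, exp (b * ∑ i, x i ^ 2) * F x ∂Measure.pi (fun i => gaussMeas (A i) b) =
      (∏ i, gaussMass (A i) b)⁻¹ * ∫ x in monSet A, F (WithLp.ofLp x) * monWeight A x := by
  rw [integral_pi_gaussMeas hA hb]
  congr 1
  refine integral_congr_ae (Eventually.of_forall fun x => ?_)
  simp only
  rw [← mul_assoc, ← exp_add]
  simp

lemma prod_gaussMass (hA : ∀ i, 0 ≤ A i) (hb : 0 < b) :
    ∏ i, gaussMass (A i) b =
      b ^ (-(monDim A / 2)) * ((∏ i, Gamma ((A i + 1) / 2)) / 2 ^ monK A) := by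
  have hk : (2 : ℝ) ^ monK A = ∏ i, if 0 < A i then (2 : ℝ) else 1 := by
    rw [Finset.prod_ite, Finset.prod_const, Finset.prod_const_one, mul_one, monK,
      Nat.card_eq_fintype_card, Fintype.card_subtype]
  have hD : -(monDim A / 2) = ∑ i, (-(A i + 1) / 2) := by
    rw [← Finset.sum_div, Finset.sum_neg_distrib, Finset.sum_add_distrib, monDim]
    simp; ring
  simp only [gaussMass_eq (hA _) hb]
  rw [Finset.prod_mul_distrib, Finset.prod_div_distrib, hk, hD,
    ← rpow_sum_of_pos hb]

end product

section scalar

/-- The optimisation over the Gaussian parameter `b` and the tangent point `l`. -/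
lemma nash_of_family {D X N E Z : ℝ} (hD : 0 < D) (hX : 0 < X) (hN : 0 < N) (hE : 0 < E)
    (hZ : 0 < Z)
    (h : ∀ b l : ℝ, 0 < b → 0 < l → 2 * X * log l - 2 * l * N + 2 * X -
      X * log (X / (b ^ (-(D / 2)) * Z)) ≤ E / b - D * X) :
    X ^ (1 + 2 / D) ≤ 2 / (Z ^ (2 / D) * exp 1 * D) * E * N ^ (4 / D) := by
  have hb : 0 < 2 * E / (D * X) := by positivity
  have h1 := h (2 * E / (D * X)) (X / N) hb (by positivity)
  have e1 : 2 * (X / N) * N = 2 * X := by field_simp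
  have e2 : E / (2 * E / (D * X)) = D * X / 2 := by field_simp
  rw [e1, e2, log_div hX.ne' hN.ne', log_div hX.ne' (by positivity),
    log_mul (by positivity) hZ.ne', log_rpow hb, log_div (by positivity) (by positivity),
    log_mul two_ne_zero hE.ne',
    log_mul hD.ne' hX.ne'] at h1
  have h2 : X * (2 * (log X - log N) - (log X - (-(D / 2) *
      (log 2 + log E - (log D + log X)) + log Z)) + D / 2) ≤ X * 0 := by linarith
  have h3 := le_of_mul_le_mul_left h2 hX
  rw [← log_le_log_iff (by positivity) (by positivity), log_rpow hX, log_mul (by positivity)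
    (by positivity), log_mul (by positivity) hE.ne', log_div two_ne_zero (by positivity),
    log_mul (by positivity) hD.ne', log_mul (by positivity) (exp_pos _).ne', log_rpow hZ,
    log_rpow hN, log_exp]
  have h4 : 2 / D * (2 * (log X - log N) - (log X - (-(D / 2) *
      (log 2 + log E - (log D + log X)) + log Z)) + D / 2) ≤ 0 :=
    mul_nonpos_of_nonneg_of_nonpos (by positivity) h3
  have e3 : 2 / D * (2 * (log X - log N) - (log X - (-(D / 2) *
      (log 2 + log E - (log D + log X)) + log Z)) + D / 2) =
      (1 + 2 / D) * log X - (log 2 - (2 / D * log Z + 1 + log D) + log E + 4 / D * log N) := by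
    field_simp; ring
  linarith

lemma nash_of_family_of_nonneg {D X N E Z : ℝ} (hD : 0 < D) (hX : 0 ≤ X) (hN : 0 ≤ N)
    (hE : 0 ≤ E) (hZ : 0 < Z)
    (h : ∀ b l : ℝ, 0 < b → 0 < l → 2 * X * log l - 2 * l * N + 2 * X -
      X * log (X / (b ^ (-(D / 2)) * Z)) ≤ E / b - D * X) :
    X ^ (1 + 2 / D) ≤ 2 / (Z ^ (2 / D) * exp 1 * D) * E * N ^ (4 / D) := by
  rcases hX.eq_or_lt with rfl | hX
  · rw [zero_rpow (by positivity)]; positivity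
  have ht : Tendsto (fun δ : ℝ => 2 / (Z ^ (2 / D) * exp 1 * D) * (E + δ) * (N + δ) ^ (4 / D))
      (𝓝[>] 0) (𝓝 (2 / (Z ^ (2 / D) * exp 1 * D) * (E + 0) * (N + 0) ^ (4 / D))) := by
    have hc : Continuous fun δ : ℝ =>
        2 / (Z ^ (2 / D) * exp 1 * D) * (E + δ) * (N + δ) ^ (4 / D) :=
      (by fun_prop : Continuous fun δ : ℝ => 2 / (Z ^ (2 / D) * exp 1 * D) * (E + δ)).mul
        ((continuous_const.add continuous_id).rpow_const fun _ => Or.inr (by positivity))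
    exact hc.continuousWithinAt
  simp only [add_zero] at ht
  refine ge_of_tendsto ht ?_
  filter_upwards [self_mem_nhdsWithin] with δ hδ
  have hδ : 0 < δ := hδ
  refine nash_of_family hD hX (by positivity) (by positivity) hZ fun b l hb hl => ?_
  refine le_trans ?_ ((h b l hb hl).trans ?_)
  · nlinarith [mul_pos hl hδ]
  · gcongr; linarith

/-- A lower bound for the entropy density of the regularised square. -/
lemma sq_add_mul_log_ge {s d l : ℝ} (hd : 0 < d) (hl : 0 < l) :
    2 * s ^ 2 * log l - 2 * l * |s| + 2 * s ^ 2 + d * log d ≤ (s ^ 2 + d) * log (s ^ 2 + d) := by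
  rcases eq_or_ne s 0 with rfl | hs
  · simp
  have hs0 : 0 < |s| := abs_pos.2 hs
  have hs2 : 0 < s ^ 2 := by positivity
  have h1 : log d ≤ log (s ^ 2 + d) := log_le_log hd (by linarith)
  have h2 : log (s ^ 2) ≤ log (s ^ 2 + d) := log_le_log hs2 (by linarith)
  have h3 : log l ≤ log |s| + (l / |s| - 1) := by
    have := log_le_sub_one_of_pos (div_pos hl hs0)
    rw [log_div hl.ne' hs0.ne'] at this
    linarith
  have h4 : log (s ^ 2) = 2 * log |s| := by rw [← sq_abs, log_pow]; norm_num
  have h5 : s ^ 2 * (l / |s|) = l * |s| := by rw [← sq_abs]; field_simp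
  have h6 := mul_le_mul_of_nonneg_left h3 hs2.le
  have h7 := mul_le_mul_of_nonneg_left h2 hs2.le
  have h8 := mul_le_mul_of_nonneg_left h1 hd.le
  rw [h4] at h7
  nlinarith

end scalar

/-- The Gaussian factor `exp (b |x|²)`. -/
def gaussFactor {n : ℕ} (b : ℝ) (x : Fin n → ℝ) : ℝ := exp (b * ∑ i, x i ^ 2)

/-- The partial derivative in the `i`-th coordinate. -/
def partialDeriv {n : ℕ} (F : (Fin n → ℝ) → ℝ) (i : Fin n) (x : Fin n → ℝ) : ℝ :=
  fderiv ℝ F x (Pi.single i 1)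

/-- The density `ε + F² exp (b |x|²)`. -/
def regSq {n : ℕ} (b ε : ℝ) (F : (Fin n → ℝ) → ℝ) (x : Fin n → ℝ) : ℝ :=
  ε + F x ^ 2 * gaussFactor b x

/-- The bound for the entropy of `regSq b ε F` in the `i`-th coordinate. -/
def regBound {n : ℕ} (A : Fin n → ℝ) (b ε : ℝ) (F : (Fin n → ℝ) → ℝ) (i : Fin n)
    (x : Fin n → ℝ) : ℝ :=
  (partialDeriv F i x ^ 2 * gaussFactor b x + ε * b ^ 2 * x i ^ 2) / b +
    (b * x i ^ 2 - (A i + 1)) * regSq b ε F x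

section logSobolev

variable {n : ℕ} {A : Fin n → ℝ} {b ε : ℝ} {F : (Fin n → ℝ) → ℝ}

lemma gaussFactor_update (b : ℝ) (x : Fin n → ℝ) (i : Fin n) (s : ℝ) :
    gaussFactor b (Function.update x i s) =
      exp (b / 2 * ∑ j ∈ Finset.univ.erase i, x j ^ 2) ^ 2 * exp (b * s ^ 2) := by
  have h : ∑ j, Function.update x i s j ^ 2 = s ^ 2 + ∑ j ∈ Finset.univ.erase i, x j ^ 2 := by
    rw [← Finset.add_sum_erase _ _ (Finset.mem_univ i), Function.update_self]
    congr 1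
    refine Finset.sum_congr rfl fun j hj => ?_
    rw [Function.update_of_ne (Finset.ne_of_mem_erase hj)]
  rw [gaussFactor, h, ← exp_nat_mul, ← exp_add]
  congr 1
  push_cast
  ring

lemma continuous_gaussFactor : Continuous (gaussFactor (n := n) b) := by
  unfold gaussFactor; fun_prop

lemma gaussFactor_pos (x : Fin n → ℝ) : 0 < gaussFactor b x := exp_pos _

lemma continuous_partialDeriv (hF : ContDiff ℝ 1 F) (i : Fin n) : Continuous (partialDeriv F i) :=
  (hF.continuous_fderiv one_ne_zero).clm_apply continuous_const

lemma hasCompactSupport_partialDeriv (hs : HasCompactSupport F) (i : Fin n) :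
    HasCompactSupport (partialDeriv F i) :=
  hs.fderiv_apply ℝ _

lemma ent_update_le (hA : ∀ i, 0 ≤ A i) (hb : 0 < b) (hε : 0 < ε) (hF : ContDiff ℝ 1 F)
    (hs : HasCompactSupport F) (i : Fin n) (x : Fin n → ℝ) :
    ent (gaussMeas (A i) b) (fun s => regSq b ε F (Function.update x i s)) ≤
      ∫ s, regBound A b ε F i (Function.update x i s) ∂gaussMeas (A i) b := by
  set c := exp (b / 2 * ∑ j ∈ Finset.univ.erase i, x j ^ 2) with hc
  have hd : ∀ s, HasDerivAt (fun s => F (Function.update x i s) * c)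
      (partialDeriv F i (Function.update x i s) * c) s := fun s =>
    (((hF.differentiable one_ne_zero).differentiableAt.hasFDerivAt).comp_hasDerivAt s
      (hasDerivAt_update x i s)).mul_const c
  have hcd : ContDiff ℝ 1 fun s => F (Function.update x i s) * c :=
    (hF.comp (contDiff_update 1 x i)).mul contDiff_const
  have hcs : HasCompactSupport fun s => F (Function.update x i s) * c := by
    refine HasCompactSupport.intro (hs.isCompact.image (continuous_apply i)) fun s hsn => ?_
    have h0 : F (Function.update x i s) = 0 := image_eq_zero_of_notMem_tsupport fun hmem =>
      hsn ⟨_, hmem, Function.update_self ..⟩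
    simp only [h0, zero_mul]
  have h := ent_gaussMeas_le (hA i) hb hε hcd hcs
  have he : (fun s => ε + (F (Function.update x i s) * c) ^ 2 * exp (b * s ^ 2)) =
      fun s => regSq b ε F (Function.update x i s) := by
    funext s; rw [regSq, gaussFactor_update]; ring
  rw [he] at h
  refine h.trans_eq (integral_congr_ae (Eventually.of_forall fun s => ?_))
  simp only [(hd s).deriv, regBound, congr_fun he s, gaussFactor_update, Function.update_self]
  rw [← congr_fun he s]
  ring

lemma regSq_mul_log_ge (hb : 0 < b) (hε : 0 < ε) {l : ℝ} (hl : 0 < l) (x : Fin n → ℝ) :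
    ∑ i, regBound A b ε F i x + (2 * log l + 2 + monDim A) * (gaussFactor b x * F x ^ 2) +
        -(2 * l) * (gaussFactor b x * |F x|) + -(2 * ε * b) * ∑ i, x i ^ 2 +
        -b⁻¹ * (gaussFactor b x * ∑ i, partialDeriv F i x ^ 2) + (ε * log ε + monDim A * ε) ≤
      regSq b ε F x * log (regSq b ε F x) := by
  have hE := gaussFactor_pos (b := b) x
  set E := gaussFactor b x with hEd
  have hlE : log E = b * ∑ i, x i ^ 2 := log_exp _
  have hq : regSq b ε F x = E * (F x ^ 2 + ε / E) := by
    rw [regSq, ← hEd]; field_simp; ring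
  have hpos : 0 < F x ^ 2 + ε / E := by positivity
  have hsum : ∑ i, regBound A b ε F i x = (E * ∑ i, partialDeriv F i x ^ 2 +
      ε * b ^ 2 * ∑ i, x i ^ 2) / b + (b * ∑ i, x i ^ 2 - monDim A) * regSq b ε F x := by
    simp only [regBound, ← hEd]
    rw [Finset.sum_add_distrib, ← Finset.sum_div, ← Finset.sum_mul, Finset.sum_add_distrib,
      Finset.sum_sub_distrib, Finset.sum_add_distrib, ← Finset.sum_mul, ← Finset.mul_sum,
      ← Finset.mul_sum, monDim]
    simp
    ring
  have hk := mul_le_mul_of_nonneg_left (sq_add_mul_log_ge (s := F x) (div_pos hε hE) hl) hE.le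
  rw [log_div hε.ne' hE.ne', hlE] at hk
  have hEe : E * (ε / E) = ε := by field_simp
  have hlog : log (regSq b ε F x) = b * ∑ i, x i ^ 2 + log (F x ^ 2 + ε / E) := by
    rw [hq, log_mul hE.ne' hpos.ne', hlE]
  have hbb : (E * ∑ i, partialDeriv F i x ^ 2 + ε * b ^ 2 * ∑ i, x i ^ 2) / b =
      b⁻¹ * (E * ∑ i, partialDeriv F i x ^ 2) + ε * b * ∑ i, x i ^ 2 := by field_simp
  have hr : regSq b ε F x = E * F x ^ 2 + ε := by rw [hq, mul_add, hEe]
  have hR : regSq b ε F x * log (regSq b ε F x) = regSq b ε F x * (b * ∑ i, x i ^ 2) +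
      E * ((F x ^ 2 + ε / E) * log (F x ^ 2 + ε / E)) := by
    rw [hlog, mul_add]; nth_rewrite 2 [hq]; ring
  have hk' : E * (2 * F x ^ 2 * log l - 2 * l * |F x| + 2 * F x ^ 2 +
      ε / E * (log ε - b * ∑ i, x i ^ 2)) = E * (2 * F x ^ 2 * log l - 2 * l * |F x| +
      2 * F x ^ 2) + ε * (log ε - b * ∑ i, x i ^ 2) := by
    rw [mul_add, ← mul_assoc E (ε / E), hEe]
  rw [hk'] at hk
  rw [hsum, hbb, hR, hr]
  linarith

lemma integrable_gaussFactor_mul {μ : Measure (Fin n → ℝ)} [IsFiniteMeasure μ]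
    {G : (Fin n → ℝ) → ℝ} (hG : Continuous G) (hs : HasCompactSupport G) :
    Integrable (fun x => gaussFactor b x * G x) μ :=
  (continuous_gaussFactor.mul hG).integrable_of_hasCompactSupport hs.mul_left

lemma hasCompactSupport_sq {X : Type*} [TopologicalSpace X] {G : X → ℝ}
    (hs : HasCompactSupport G) : HasCompactSupport fun x => G x ^ 2 :=
  hs.comp_left (g := fun t : ℝ => t ^ 2) (by simp)

lemma hasCompactSupport_sum_partialDeriv_sq (hs : HasCompactSupport F) :
    HasCompactSupport fun x => ∑ i, partialDeriv F i x ^ 2 := by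
  refine (hs.fderiv ℝ).comp_left (g := fun T : (Fin n → ℝ) →L[ℝ] ℝ =>
    ∑ i, T (Pi.single i 1) ^ 2) (by simp)

lemma integrable_sq_pi_gaussMeas (hA : ∀ i, 0 ≤ A i) (hb : 0 < b) (i : Fin n) :
    Integrable (fun x : Fin n → ℝ => x i ^ 2) (Measure.pi fun i => gaussMeas (A i) b) := by
  have := fun i => isProbabilityMeasure_gaussMeas (hA i) hb
  exact (measurePreserving_eval (fun i => gaussMeas (A i) b) i).integrable_comp_of_integrable
    (integrable_sq_gaussMeas (hA i) hb)

lemma continuous_regSq (hF : Continuous F) : Continuous (regSq b ε F) :=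
  continuous_const.add ((hF.pow 2).mul continuous_gaussFactor)

lemma exists_regSq_mem_Icc (hF : Continuous F) (hs : HasCompactSupport F) :
    ∃ K, ∀ x, regSq b ε F x ∈ Set.Icc ε K := by
  obtain ⟨K, hK⟩ := (hasCompactSupport_sq hs).mul_right (f' := gaussFactor b)
    |>.exists_bound_of_continuous ((hF.pow 2).mul continuous_gaussFactor)
  refine ⟨ε + K, fun x => ⟨?_, ?_⟩⟩
  · exact le_add_of_nonneg_right (mul_nonneg (sq_nonneg _) (gaussFactor_pos x).le)
  · exact add_le_add_right ((le_abs_self _).trans (hK x)) _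

lemma integrable_regBound (hA : ∀ i, 0 ≤ A i) (hb : 0 < b) (hF : ContDiff ℝ 1 F)
    (hs : HasCompactSupport F) (i : Fin n) :
    Integrable (regBound A b ε F i) (Measure.pi fun i => gaussMeas (A i) b) := by
  have := fun i => isProbabilityMeasure_gaussMeas (hA i) hb
  obtain ⟨K, hK⟩ := exists_regSq_mem_Icc (b := b) (ε := ε) hF.continuous hs
  have h2 := integrable_sq_pi_gaussMeas hA hb i
  have h1 : Integrable (fun x => gaussFactor b x * partialDeriv F i x ^ 2)
      (Measure.pi fun i => gaussMeas (A i) b) :=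
    integrable_gaussFactor_mul ((continuous_partialDeriv hF i).pow 2)
      (hasCompactSupport_sq (hasCompactSupport_partialDeriv hs i))
  refine Integrable.add (((h1.congr (Eventually.of_forall fun x => mul_comm _ _)).add
    (h2.const_mul _)).div_const _) ?_
  refine ((h2.const_mul b).sub (integrable_const _)).mul_bdd
    (continuous_regSq hF.continuous).aestronglyMeasurable (c := max |ε| |K|)
    (Eventually.of_forall fun x => abs_le_max_abs_abs (hK x).1 (hK x).2)

lemma integral_linear_combination {X : Type*} [MeasurableSpace X] {μ : Measure X}
    [IsProbabilityMeasure μ] {f₀ f₁ f₂ f₃ f₄ : X → ℝ} (h₀ : Integrable f₀ μ)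
    (h₁ : Integrable f₁ μ) (h₂ : Integrable f₂ μ) (h₃ : Integrable f₃ μ) (h₄ : Integrable f₄ μ)
    (c₁ c₂ c₃ c₄ c₅ : ℝ) :
    Integrable (fun x => f₀ x + c₁ * f₁ x + c₂ * f₂ x + c₃ * f₃ x + c₄ * f₄ x + c₅) μ ∧
    ∫ x, (f₀ x + c₁ * f₁ x + c₂ * f₂ x + c₃ * f₃ x + c₄ * f₄ x + c₅) ∂μ =
      ∫ x, f₀ x ∂μ + c₁ * ∫ x, f₁ x ∂μ + c₂ * ∫ x, f₂ x ∂μ + c₃ * ∫ x, f₃ x ∂μ +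
        c₄ * ∫ x, f₄ x ∂μ + c₅ := by
  have i1 := h₀.add (h₁.const_mul c₁)
  have i2 := i1.add (h₂.const_mul c₂)
  have i3 := i2.add (h₃.const_mul c₃)
  have i4 := i3.add (h₄.const_mul c₄)
  have i5 := i4.add (integrable_const c₅)
  refine ⟨i5, ?_⟩
  refine (integral_add i4 (integrable_const c₅)).trans ?_
  rw [integral_add' i3 (h₄.const_mul c₄), integral_add' i2 (h₃.const_mul c₃),
    integral_add' i1 (h₂.const_mul c₂), integral_add' h₀ (h₁.const_mul c₁)]
  simp only [integral_const_mul, integral_const, probReal_univ, one_smul]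

lemma logSobolev_pi_gaussMeas_regularized (hA : ∀ i, 0 ≤ A i) (hb : 0 < b) (hε : 0 < ε)
    (hF : ContDiff ℝ 1 F) (hs : HasCompactSupport F) {l : ℝ} (hl : 0 < l)
    {μ : Measure (Fin n → ℝ)} (hμ : μ = Measure.pi fun i => gaussMeas (A i) b) :
    (2 * log l + 2 + monDim A) * ∫ x, gaussFactor b x * F x ^ 2 ∂μ +
        -(2 * l) * ∫ x, gaussFactor b x * |F x| ∂μ + -(2 * ε * b) * ∫ x, ∑ i, x i ^ 2 ∂μ +
        -b⁻¹ * ∫ x, gaussFactor b x * ∑ i, partialDeriv F i x ^ 2 ∂μ +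
        (ε * log ε + monDim A * ε) ≤
      (ε + ∫ x, gaussFactor b x * F x ^ 2 ∂μ) * log (ε + ∫ x, gaussFactor b x * F x ^ 2 ∂μ) := by
  have := fun i => isProbabilityMeasure_gaussMeas (hA i) hb
  obtain ⟨K, hK⟩ := exists_regSq_mem_Icc (b := b) (ε := ε) hF.continuous hs
  have hm := (continuous_regSq (b := b) (ε := ε) hF.continuous).measurable
  have hent := ent_pi_le (fun i => gaussMeas (A i) b) hε hm hK
    (integrable_regBound hA hb hF hs) fun i x => ent_update_le hA hb hε hF hs i x
  have iR : Integrable (fun x => ∑ i, regBound A b ε F i x) μ :=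
    hμ ▸ integrable_finsetSum _ fun i _ => integrable_regBound hA hb hF hs i
  rw [← integral_finsetSum _ fun i _ => integrable_regBound hA hb hF hs i, ← hμ] at hent
  have hprob : IsProbabilityMeasure μ := hμ ▸ inferInstance
  have iX : Integrable (fun x => gaussFactor b x * F x ^ 2) μ :=
    integrable_gaussFactor_mul (hF.continuous.pow 2) (hasCompactSupport_sq hs)
  have iN : Integrable (fun x => gaussFactor b x * |F x|) μ :=
    integrable_gaussFactor_mul hF.continuous.abs (hs.comp_left abs_zero)
  have iM : Integrable (fun x : Fin n → ℝ => ∑ i, x i ^ 2) μ :=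
    hμ ▸ integrable_finsetSum _ fun i _ => integrable_sq_pi_gaussMeas hA hb i
  have iE : Integrable (fun x => gaussFactor b x * ∑ i, partialDeriv F i x ^ 2) μ :=
    integrable_gaussFactor_mul
      (continuous_finsetSum _ fun i _ => (continuous_partialDeriv hF i).pow 2)
      (hasCompactSupport_sum_partialDeriv_sq hs)
  have hcomb := integral_linear_combination iR iX iN iM iE (2 * log l + 2 + monDim A) (-(2 * l))
    (-(2 * ε * b)) (-b⁻¹) (ε * log ε + monDim A * ε)
  have hle := integral_mono hcomb.1 (integrable_mul_log hε hm hm hK hK)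
    fun x => regSq_mul_log_ge (A := A) hb hε hl x
  have hreg : ∫ x, regSq b ε F x ∂μ = ε + ∫ x, gaussFactor b x * F x ^ 2 ∂μ := by
    simp only [regSq, mul_comm _ (gaussFactor b _)]
    rw [integral_add (integrable_const _) iX]
    simp
  rw [hcomb.2] at hle
  rw [ent, hreg] at hent
  linarith

/-- Logarithmic Sobolev inequality for the product of the Gaussian monomial measures, linearised
at the slope `l`. -/
lemma logSobolev_pi_gaussMeas (hA : ∀ i, 0 ≤ A i) (hb : 0 < b)
    (hF : ContDiff ℝ 1 F) (hs : HasCompactSupport F) {l : ℝ} (hl : 0 < l)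
    {μ : Measure (Fin n → ℝ)} (hμ : μ = Measure.pi fun i => gaussMeas (A i) b) :
    (2 * log l + 2 + monDim A) * ∫ x, gaussFactor b x * F x ^ 2 ∂μ +
        -(2 * l) * ∫ x, gaussFactor b x * |F x| ∂μ +
        -b⁻¹ * ∫ x, gaussFactor b x * ∑ i, partialDeriv F i x ^ 2 ∂μ ≤
      (∫ x, gaussFactor b x * F x ^ 2 ∂μ) * log (∫ x, gaussFactor b x * F x ^ 2 ∂μ) := by
  set X := ∫ x, gaussFactor b x * F x ^ 2 ∂μ
  set N := ∫ x, gaussFactor b x * |F x| ∂μ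
  set M := ∫ x, ∑ i, x i ^ 2 ∂μ
  set E := ∫ x, gaussFactor b x * ∑ i, partialDeriv F i x ^ 2 ∂μ
  have h1 : Tendsto (fun ε : ℝ => (2 * log l + 2 + monDim A) * X + -(2 * l) * N +
      -(2 * ε * b) * M + -b⁻¹ * E + (ε * log ε + monDim A * ε)) (𝓝[>] 0)
      (𝓝 ((2 * log l + 2 + monDim A) * X + -(2 * l) * N + -(2 * 0 * b) * M + -b⁻¹ * E +
        (0 * log 0 + monDim A * 0))) := by
    have hc : Continuous fun ε : ℝ => (2 * log l + 2 + monDim A) * X + -(2 * l) * N +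
        -(2 * ε * b) * M + -b⁻¹ * E + (ε * log ε + monDim A * ε) := by
      have := continuous_mul_log
      fun_prop
    exact hc.continuousWithinAt
  have h2 : Tendsto (fun ε : ℝ => (ε + X) * log (ε + X)) (𝓝[>] 0) (𝓝 ((0 + X) * log (0 + X))) :=
    (continuous_mul_log.comp (continuous_id.add continuous_const)).continuousWithinAt
  have h := le_of_tendsto_of_tendsto h1 h2 (by
    filter_upwards [self_mem_nhdsWithin] with ε hε
    exact logSobolev_pi_gaussMeas_regularized hA hb hε hF hs hl hμ)
  simpa using h

end logSobolev

lemma sum_sq_apply_single {n : ℕ} (T : EuclideanSpace ℝ (Fin n) →L[ℝ] ℝ) :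
    ∑ i, T (EuclideanSpace.single i 1) ^ 2 = ‖T‖ ^ 2 := by
  rw [← (InnerProductSpace.toDual ℝ (EuclideanSpace ℝ (Fin n))).symm.norm_map T,
    EuclideanSpace.norm_sq_eq]
  refine Finset.sum_congr rfl fun i _ => ?_
  rw [← InnerProductSpace.toDual_symm_apply (𝕜 := ℝ) (y := T), EuclideanSpace.inner_single_right]
  simp

lemma partialDeriv_comp_toLp {n : ℕ} {f : EuclideanSpace ℝ (Fin n) → ℝ} (hf : ContDiff ℝ 1 f)
    (i : Fin n) (x : Fin n → ℝ) :
    partialDeriv (fun y => f (WithLp.toLp 2 y)) i x =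
      fderiv ℝ f (WithLp.toLp 2 x) (EuclideanSpace.single i 1) := by
  have h : HasFDerivAt (fun y => f (WithLp.toLp 2 y)) ((fderiv ℝ f (WithLp.toLp 2 x)).comp
      ((PiLp.continuousLinearEquiv 2 ℝ fun _ : Fin n => ℝ).symm : (Fin n → ℝ) →L[ℝ] _))
      x :=
    HasFDerivAt.comp (g := f) x (hf.differentiable one_ne_zero _).hasFDerivAt
      ((PiLp.continuousLinearEquiv 2 ℝ fun _ : Fin n => ℝ).symm.hasFDerivAt)
  rw [partialDeriv, h.fderiv]
  rfl

/-- the Nash type inequality with monomial weights. -/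
theorem nash_monomial_weight {n : ℕ} (hn : 0 < n) (A : Fin n → ℝ) (hA : ∀ i, 0 ≤ A i)
    (f : EuclideanSpace ℝ (Fin n) → ℝ) (hf : ContDiff ℝ 1 f) (hsupp : HasCompactSupport f) :
    (∫ x in monSet A, f x ^ 2 * monWeight A x) ^ (1 + 2 / monDim A) ≤
      2 / (monPi A * exp 1 * monDim A) *
        (∫ x in monSet A, ‖fderiv ℝ f x‖ ^ 2 * monWeight A x) *
        (∫ x in monSet A, |f x| * monWeight A x) ^ (4 / monDim A) := by
  have hD : 0 < monDim A := by
    have hsum : 0 ≤ ∑ i, A i := Finset.sum_nonneg fun i _ => hA i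
    have hn' : (0 : ℝ) < n := Nat.cast_pos.2 hn
    rw [monDim, Fintype.card_fin]
    linarith
  have hZ : 0 < (∏ i, Gamma ((A i + 1) / 2)) / 2 ^ monK A :=
    div_pos (Finset.prod_pos fun i _ => Gamma_pos_of_pos (by linarith [hA i])) (by positivity)
  have hw : ∀ x, 0 ≤ monWeight A x := fun x =>
    Finset.prod_nonneg fun i _ => rpow_nonneg (abs_nonneg _) _
  refine nash_of_family_of_nonneg hD (integral_nonneg fun x => mul_nonneg (sq_nonneg _) (hw x))
    (integral_nonneg fun x => mul_nonneg (abs_nonneg _) (hw x))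
    (integral_nonneg fun x => mul_nonneg (sq_nonneg _) (hw x)) hZ fun b l hb hl => ?_
  have hF : ContDiff ℝ 1 fun y : Fin n → ℝ => f (WithLp.toLp 2 y) :=
    hf.comp (PiLp.continuousLinearEquiv 2 ℝ fun _ : Fin n => ℝ).symm.contDiff
  have hFs : HasCompactSupport fun y : Fin n → ℝ => f (WithLp.toLp 2 y) :=
    hsupp.comp_homeomorph (PiLp.continuousLinearEquiv 2 ℝ fun _ : Fin n => ℝ).symm.toHomeomorph
  have h := logSobolev_pi_gaussMeas hA hb hF hFs hl rfl
  have hX := integral_pi_gaussMeas_exp_mul hA hb fun y => f (WithLp.toLp 2 y) ^ 2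
  have hN := integral_pi_gaussMeas_exp_mul hA hb fun y => |f (WithLp.toLp 2 y)|
  have hE := integral_pi_gaussMeas_exp_mul hA hb fun y =>
    ∑ i, partialDeriv (fun y => f (WithLp.toLp 2 y)) i y ^ 2
  simp only [partialDeriv_comp_toLp hf, sum_sq_apply_single, WithLp.toLp_ofLp] at hX hN hE
  simp only [gaussFactor, partialDeriv_comp_toLp hf, sum_sq_apply_single, hX, hN, hE] at h
  have hM : 0 < ∏ i, gaussMass (A i) b := Finset.prod_pos fun i _ => gaussMass_pos (hA i) hb
  rw [← prod_gaussMass hA hb]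
  set M := ∏ i, gaussMass (A i) b
  have h' := mul_le_mul_of_nonneg_left h hM.le
  rw [inv_mul_eq_div _ (∫ x in monSet A, f x ^ 2 * monWeight A x)] at h'
  field_simp at h' ⊢
  linarith
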